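/- Let d be a positive integer, let x_1, …, x_m ∈ [−1,1]^d be design points (with coordinates x_{ij}, j = 1,…,d), let n_1, …, n_m be positive integers with n = n_1 + ⋯ + n_m, let F_ξ = (1/n) Σ_{i=1}^m n_i δ_{x_i}, and let F_asin be the probability measure on [−1,1]^d with density ∏_{j=1}^d 1/(π√(1−t_j²)) with respect to Lebesgue measure on (−1,1)^d. Then ∫∫ K_d(x,t) d(F_asin−F_ξ)(x) d(F_asin−F_ξ)(t) = (1 + 2/π − 4/π²)^d − (2/n) Σ_{i=1}^m n_i ∏_{j=1}^d (1 + 1/π + |x_{ij}|/2 − (1/π)(x_{ij}·arcsin(x_{ij}) + √(1−x_{ij}²))) + (1/n²) Σ_{i=1}^m Σ_{k=1}^m n_i n_k ∏_{j=1}^d (1 + (|x_{ij}| + |x_{kj}| − |x_{ij} − x_{kj}|)/2), where K_d(x,t) = ∏_{j=1}^d (1 + (|x_j| + |t_j| − |x_j − t_j|)/2). -/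

import Mathlib

open MeasureTheory Real
open scoped ENNReal

/-!
The arcsine law is the image of the uniform law on `[0, π]` under `cos`, so its potential against
the one-dimensional kernel `1 + (|s| + |t| - |s - t|) / 2` reduces to the integral of `|s - cos θ|`,
which is split at `θ = arccos s`. Integrating the potential once more gives the energy
`1 + 2 / π - 4 / π ^ 2`. Both the kernel and the law are products, so in dimension `d` the potential
is the product of the one-dimensional ones and the energy is a `d`-th power. By symmetry of the
kernel the two cross terms of the discrepancy agree, each being the integral of the potential.
-/

section GeneralMeasureTheory

variable {E : Type*} [MeasurableSpace E]

lemma integrable_of_ae_mem_isCompact [TopologicalSpace E] [T2Space E] [OpensMeasurableSpace E]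
    {F : Type*} [NormedAddCommGroup F] {μ : Measure E} [IsFiniteMeasureOnCompacts μ] {s : Set E}
    (hs : IsCompact s) (hμ : ∀ᵐ a ∂μ, a ∈ s) {f : E → F} (hf : ContinuousOn f s) :
    Integrable f μ := by
  rw [← Measure.restrict_eq_self_of_ae_mem hμ]
  exact hf.integrableOn_compact hs

lemma pi_withDensity_ofReal {ι : Type*} [Fintype ι] {X : ι → Type*}
    [∀ i, MeasurableSpace (X i)] {μ : ∀ i, Measure (X i)} [∀ i, SigmaFinite (μ i)]
    {g : ∀ i, X i → ℝ} (hg : ∀ i, Integrable (g i) (μ i)) (hg0 : ∀ i t, 0 ≤ g i t) :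
    Measure.pi (fun i => (μ i).withDensity fun t => ENNReal.ofReal (g i t))
      = (Measure.pi μ).withDensity fun t => ENNReal.ofReal (∏ i, g i (t i)) := by
  have (i : ι) : IsFiniteMeasure ((μ i).withDensity fun t => ENNReal.ofReal (g i t)) :=
    isFiniteMeasure_withDensity_ofReal (hg i).2
  refine Measure.pi_eq fun s hs => ?_
  have hgs (i : ι) : Integrable (g i) ((μ i).restrict (s i)) := (hg i).restrict
  have hprod_nonneg (t : ∀ i, X i) : 0 ≤ ∏ i, g i (t i) :=
    Finset.prod_nonneg fun i _ => hg0 i (t i)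
  calc (Measure.pi μ).withDensity (fun t => ENNReal.ofReal (∏ i, g i (t i))) (Set.univ.pi s)
      = ∫⁻ t, ENNReal.ofReal (∏ i, g i (t i)) ∂Measure.pi fun i => (μ i).restrict (s i) := by
        rw [withDensity_apply _ (.univ_pi hs), Measure.restrict_pi_pi]
    _ = ENNReal.ofReal (∏ i, ∫ t in s i, g i t ∂μ i) := by
        rw [← ofReal_integral_eq_lintegral_ofReal (.fintype_prod_dep hgs)
          (ae_of_all _ hprod_nonneg), integral_fintype_prod_eq_prod]
    _ = ∏ i, ∫⁻ t in s i, ENNReal.ofReal (g i t) ∂μ i := by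
        rw [ENNReal.ofReal_prod_of_nonneg fun i _ => integral_nonneg (hg0 i)]
        exact Finset.prod_congr rfl fun i _ =>
          ofReal_integral_eq_lintegral_ofReal (hgs i) (ae_of_all _ (hg0 i))
    _ = ∏ i, (μ i).withDensity (fun t => ENNReal.ofReal (g i t)) (s i) :=
        Finset.prod_congr rfl fun i _ => (withDensity_apply _ (hs i)).symm

/-- The squared discrepancy `∫∫ K d(μ - ν) d(μ - ν)` of `ν` with respect to the target `μ` under
the kernel `K`, expanded bilinearly so that no signed measure is needed. -/
noncomputable def kernelDiscrepancySq (K : E → E → ℝ) (μ ν : Measure E) : ℝ :=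
  (∫ a, ∫ t, K a t ∂μ ∂μ) - (∫ a, ∫ t, K a t ∂ν ∂μ) - (∫ a, ∫ t, K a t ∂μ ∂ν)
    + ∫ a, ∫ t, K a t ∂ν ∂ν

lemma kernelDiscrepancySq_of_symm {K : E → E → ℝ} (hK : ∀ a t, K a t = K t a)
    {μ ν : Measure E} [SFinite μ] [SFinite ν]
    (hint : Integrable (Function.uncurry K) (μ.prod ν)) :
    kernelDiscrepancySq K μ ν
      = (∫ a, ∫ t, K a t ∂μ ∂μ) - 2 * (∫ a, ∫ t, K a t ∂μ ∂ν) + ∫ a, ∫ t, K a t ∂ν ∂ν := by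
  have hswap : ∫ a, ∫ t, K a t ∂ν ∂μ = ∫ a, ∫ t, K a t ∂μ ∂ν := by
    rw [integral_integral_swap hint]
    simp only [hK]
  rw [kernelDiscrepancySq, hswap]
  ring

end GeneralMeasureTheory

section EmpiricalMeasure

variable {E κ : Type*} [MeasurableSpace E] [Fintype κ]

/-- The empirical measure of the exact design with points `x i` and replication counts `w i`.
It is `0` when all counts vanish, since `⊤ • 0 = 0`. -/
noncomputable def empiricalMeasure (x : κ → E) (w : κ → ℕ) : Measure E :=
  ((∑ i, w i : ℕ) : ℝ≥0∞)⁻¹ • ∑ i, (w i : ℝ≥0∞) • Measure.dirac (x i)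

instance (x : κ → E) (w : κ → ℕ) : IsFiniteMeasure (empiricalMeasure x w) := by
  refine ⟨?_⟩
  simp only [empiricalMeasure, Measure.smul_apply, Measure.finsetSum_apply, measure_univ,
    smul_eq_mul, mul_one, ← Nat.cast_sum]
  exact (ENNReal.inv_mul_le_one _).trans_lt ENNReal.one_lt_top

lemma ae_empiricalMeasure {x : κ → E} (w : κ → ℕ) {s : Set E} (hs : MeasurableSet s)
    (hx : ∀ i, x i ∈ s) : ∀ᵐ a ∂empiricalMeasure x w, a ∈ s := by
  refine Measure.ae_smul_measure (ae_finsetSum_measure_iff.2 fun i _ => ?_) _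
  exact Measure.ae_smul_measure ((ae_dirac_iff hs).2 (hx i)) _

variable [MeasurableSingletonClass E]

lemma integral_empiricalMeasure (x : κ → E) (w : κ → ℕ) (f : E → ℝ) :
    ∫ a, f a ∂empiricalMeasure x w = 1 / ((∑ i, w i : ℕ) : ℝ) * ∑ i, (w i : ℝ) * f (x i) := by
  rw [empiricalMeasure, integral_smul_measure, integral_finsetSum_measure fun i _ =>
    (integrable_dirac (by simp)).smul_measure (by simp)]
  simp [integral_smul_measure, ENNReal.toReal_sum]

lemma integral_integral_empiricalMeasure (x : κ → E) (w : κ → ℕ) (K : E → E → ℝ) :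
    ∫ a, ∫ t, K a t ∂empiricalMeasure x w ∂empiricalMeasure x w
      = 1 / ((∑ i, w i : ℕ) : ℝ) ^ 2 * ∑ i, ∑ k, (w i : ℝ) * (w k : ℝ) * K (x i) (x k) := by
  simp only [integral_empiricalMeasure, Finset.mul_sum]
  refine Finset.sum_congr rfl fun i _ => Finset.sum_congr rfl fun k _ => ?_
  ring

end EmpiricalMeasure

section ArcsineLaw

/-- The arcsine law on `(-1, 1)`. -/
noncomputable def arcsineLaw : Measure ℝ :=
  (volume.restrict (Set.Ioo (-1) 1)).withDensity fun t => ENNReal.ofReal (1 / (π * √(1 - t ^ 2)))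

lemma integrableOn_arcsine_density :
    IntegrableOn (fun t : ℝ => 1 / (π * √(1 - t ^ 2))) (Set.Ioo (-1) 1) := by
  have h := Polynomial.Chebyshev.intervalIntegrable_sqrt_one_sub_sq_inv
  rw [intervalIntegrable_iff_integrableOn_Ioo_of_le (by norm_num)] at h
  simpa only [IntegrableOn, one_div, mul_inv, sqrt_inv] using h.const_mul π⁻¹

lemma ae_arcsineLaw_mem_Icc : ∀ᵐ t ∂arcsineLaw, t ∈ Set.Icc (-1 : ℝ) 1 :=
  withDensity_absolutelyContinuous _ _ <|
    (ae_restrict_mem measurableSet_Ioo).mono fun _ ht => Set.Ioo_subset_Icc_self ht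

lemma integral_arcsineLaw (f : ℝ → ℝ) :
    ∫ t, f t ∂arcsineLaw = 1 / π * ∫ θ in 0..π, f (cos θ) := by
  rw [← Polynomial.Chebyshev.integral_measureT_eq_integral_cos,
    Polynomial.Chebyshev.integral_measureT, arcsineLaw,
    integral_withDensity_eq_integral_toReal_smul (by fun_prop)
      (ae_of_all _ fun _ => ENNReal.ofReal_lt_top),
    intervalIntegral.integral_of_le (by norm_num), integral_Ioc_eq_integral_Ioo,
    ← integral_const_mul]
  refine integral_congr_ae (ae_of_all _ fun t => ?_)
  simp only [ENNReal.toReal_ofReal (by positivity : 0 ≤ 1 / (π * √(1 - t ^ 2))), smul_eq_mul,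
    sqrt_inv]
  ring

instance : IsProbabilityMeasure arcsineLaw := by
  have : IsFiniteMeasure arcsineLaw :=
    isFiniteMeasure_withDensity_ofReal integrableOn_arcsine_density.2
  have hmass := integral_arcsineLaw fun _ => 1
  exact isProbabilityMeasure_iff_real.2 (by simpa using hmass)

lemma integrable_arcsineLaw {f : ℝ → ℝ} (hf : Continuous f) : Integrable f arcsineLaw :=
  integrable_of_ae_mem_isCompact isCompact_Icc ae_arcsineLaw_mem_Icc hf.continuousOn

lemma integral_abs_sub_cos {s : ℝ} (hs : s ∈ Set.Icc (-1 : ℝ) 1) :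
    ∫ θ in 0..π, |s - cos θ| = 2 * (s * arcsin s + √(1 - s ^ 2)) := by
  have hi (f : ℝ → ℝ) (hf : Continuous f) (a b : ℝ) : IntervalIntegrable f volume a b :=
    hf.intervalIntegrable a b
  have hleft : ∫ θ in 0..arccos s, |s - cos θ| = ∫ θ in 0..arccos s, (cos θ - s) := by
    refine intervalIntegral.integral_congr fun θ hθ => ?_
    rw [Set.uIcc_of_le (arccos_nonneg s)] at hθ
    have hle : s ≤ cos θ := (cos_arccos hs.1 hs.2).symm.trans_le
      (cos_le_cos_of_nonneg_of_le_pi hθ.1 (arccos_le_pi s) hθ.2)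
    exact (abs_of_nonpos (sub_nonpos.2 hle)).trans (neg_sub _ _)
  have hright : ∫ θ in arccos s..π, |s - cos θ| = ∫ θ in arccos s..π, (s - cos θ) := by
    refine intervalIntegral.integral_congr fun θ hθ => ?_
    rw [Set.uIcc_of_le (arccos_le_pi s)] at hθ
    have hle : cos θ ≤ s := (cos_le_cos_of_nonneg_of_le_pi (arccos_nonneg s) hθ.2 hθ.1).trans_eq
      (cos_arccos hs.1 hs.2)
    exact abs_of_nonneg (sub_nonneg.2 hle)
  rw [← intervalIntegral.integral_add_adjacent_intervals (hi _ (by fun_prop) 0 (arccos s))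
      (hi _ (by fun_prop) (arccos s) π), hleft, hright,
    intervalIntegral.integral_sub (hi _ (by fun_prop) _ _) (hi _ (by fun_prop) _ _),
    intervalIntegral.integral_sub (hi _ (by fun_prop) _ _) (hi _ (by fun_prop) _ _)]
  simp only [intervalIntegral.integral_const, integral_cos, sin_arccos, sin_zero, sin_pi,
    smul_eq_mul, arcsin_eq_pi_div_two_sub_arccos]
  ring

lemma integral_abs_sub_arcsineLaw {s : ℝ} (hs : s ∈ Set.Icc (-1 : ℝ) 1) :
    ∫ t, |s - t| ∂arcsineLaw = 2 / π * (s * arcsin s + √(1 - s ^ 2)) := by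
  rw [integral_arcsineLaw, integral_abs_sub_cos hs]
  ring

lemma integral_abs_arcsineLaw : ∫ t, |t| ∂arcsineLaw = 2 / π := by
  simpa using integral_abs_sub_arcsineLaw (s := 0) (by simp)

lemma integral_sqrt_one_sub_sq_arcsineLaw : ∫ t, √(1 - t ^ 2) ∂arcsineLaw = 2 / π := by
  have hsin : ∫ θ in 0..π, √(1 - cos θ ^ 2) = ∫ θ in 0..π, sin θ := by
    refine intervalIntegral.integral_congr fun θ hθ => ?_
    rw [Set.uIcc_of_le pi_nonneg] at hθ
    exact (sin_eq_sqrt_one_sub_cos_sq hθ.1 hθ.2).symm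
  rw [integral_arcsineLaw, hsin, integral_sin, cos_zero, cos_pi]
  ring

lemma integral_mul_arcsin_arcsineLaw : ∫ t, t * arcsin t ∂arcsineLaw = 2 / π := by
  have hangle : ∫ θ in 0..π, cos θ * arcsin (cos θ) = ∫ θ in 0..π, (π / 2 - θ) * cos θ := by
    refine intervalIntegral.integral_congr fun θ hθ => ?_
    rw [Set.uIcc_of_le pi_nonneg] at hθ
    simp only [arcsin_eq_pi_div_two_sub_arccos, arccos_cos hθ.1 hθ.2, mul_comm]
  have hderiv (θ : ℝ) :
      HasDerivAt (fun θ => (π / 2 - θ) * sin θ - cos θ) ((π / 2 - θ) * cos θ) θ := by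
    refine ((((hasDerivAt_id θ).const_sub (π / 2)).mul (hasDerivAt_sin θ)).sub
      (hasDerivAt_cos θ)).congr_deriv ?_
    simp
  rw [integral_arcsineLaw, hangle, intervalIntegral.integral_eq_sub_of_hasDerivAt
    (fun θ _ => hderiv θ) (Continuous.intervalIntegrable (by fun_prop) _ _)]
  simp only [sin_pi, sin_zero, cos_pi, cos_zero]
  ring

end ArcsineLaw

section CenteredKernel

/-- The kernel of the centered discrepancy in one dimension, with center `0`. -/
noncomputable def centeredKernel (s t : ℝ) : ℝ := 1 + (|s| + |t| - |s - t|) / 2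

/-- The integral of `centeredKernel s` against the arcsine law, as an explicit function of
`s ∈ [-1, 1]`. -/
noncomputable def arcsinePotential (s : ℝ) : ℝ :=
  1 + 1 / π + |s| / 2 - (1 / π) * (s * arcsin s + √(1 - s ^ 2))

lemma centeredKernel_comm (s t : ℝ) : centeredKernel s t = centeredKernel t s := by
  rw [centeredKernel, centeredKernel, abs_sub_comm, add_comm |s|]

lemma integral_centeredKernel_arcsineLaw {s : ℝ} (hs : s ∈ Set.Icc (-1 : ℝ) 1) :
    ∫ t, centeredKernel s t ∂arcsineLaw = arcsinePotential s := by
  simp only [centeredKernel]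
  rw [integral_add (integrable_arcsineLaw (by fun_prop)) (integrable_arcsineLaw (by fun_prop)),
    integral_div,
    integral_sub (integrable_arcsineLaw (by fun_prop)) (integrable_arcsineLaw (by fun_prop)),
    integral_add (integrable_arcsineLaw (by fun_prop)) (integrable_arcsineLaw (by fun_prop)),
    integral_abs_arcsineLaw, integral_abs_sub_arcsineLaw hs, arcsinePotential]
  simp only [integral_const, probReal_univ, one_smul]
  ring

lemma integral_arcsinePotential_arcsineLaw :
    ∫ s, arcsinePotential s ∂arcsineLaw = 1 + 2 / π - 4 / π ^ 2 := by
  simp only [arcsinePotential]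
  rw [integral_sub (integrable_arcsineLaw (by fun_prop)) (integrable_arcsineLaw (by fun_prop)),
    integral_add (integrable_arcsineLaw (by fun_prop)) (integrable_arcsineLaw (by fun_prop)),
    integral_div, integral_const_mul,
    integral_add (integrable_arcsineLaw (by fun_prop)) (integrable_arcsineLaw (by fun_prop)),
    integral_add (integrable_arcsineLaw (by fun_prop)) (integrable_arcsineLaw (by fun_prop)),
    integral_abs_arcsineLaw, integral_mul_arcsin_arcsineLaw, integral_sqrt_one_sub_sq_arcsineLaw]
  simp only [integral_const, probReal_univ, one_smul]
  ring

end CenteredKernel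

section ProductKernel

variable {ι : Type*} [Fintype ι]

/-- The product of the arcsine laws, a probability measure on `[-1, 1]^ι`. -/
noncomputable def arcsineMeasure (ι : Type*) [Fintype ι] : Measure (ι → ℝ) :=
  Measure.pi fun _ => arcsineLaw

/-- The kernel `K_d` of the multivariate centered discrepancy, with center `0`. -/
noncomputable def centeredProductKernel (a t : ι → ℝ) : ℝ := ∏ j, centeredKernel (a j) (t j)

instance : IsProbabilityMeasure (arcsineMeasure ι) :=
  inferInstanceAs (IsProbabilityMeasure (Measure.pi fun _ => arcsineLaw))

lemma arcsineMeasure_eq_withDensity :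
    arcsineMeasure ι = (volume.restrict (Set.univ.pi fun _ : ι => Set.Ioo (-1 : ℝ) 1)).withDensity
      fun t => ENNReal.ofReal (∏ j, 1 / (π * √(1 - t j ^ 2))) := by
  rw [volume_pi, Measure.restrict_pi_pi]
  exact pi_withDensity_ofReal (fun _ => integrableOn_arcsine_density) fun _ _ => by positivity

lemma ae_arcsineMeasure_mem_cube :
    ∀ᵐ a ∂arcsineMeasure ι, a ∈ Set.univ.pi fun _ : ι => Set.Icc (-1 : ℝ) 1 := by
  simp only [Set.mem_univ_pi]
  exact ae_all_iff.2 fun _ => Measure.tendsto_eval_ae_ae.eventually ae_arcsineLaw_mem_Icc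

lemma centeredProductKernel_comm (a t : ι → ℝ) :
    centeredProductKernel a t = centeredProductKernel t a :=
  Finset.prod_congr rfl fun _ _ => centeredKernel_comm _ _

lemma continuous_uncurry_centeredProductKernel :
    Continuous (Function.uncurry (centeredProductKernel (ι := ι))) := by
  unfold Function.uncurry centeredProductKernel centeredKernel
  fun_prop

lemma integral_centeredProductKernel_arcsineMeasure {a : ι → ℝ}
    (ha : a ∈ Set.univ.pi fun _ : ι => Set.Icc (-1 : ℝ) 1) :
    ∫ t, centeredProductKernel a t ∂arcsineMeasure ι = ∏ j, arcsinePotential (a j) :=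
  (integral_fintype_prod_eq_prod fun j => centeredKernel (a j)).trans <|
    Finset.prod_congr rfl fun j _ => integral_centeredKernel_arcsineLaw (ha j trivial)

lemma integral_integral_centeredProductKernel_arcsineMeasure :
    ∫ a, ∫ t, centeredProductKernel a t ∂arcsineMeasure ι ∂arcsineMeasure ι
      = (1 + 2 / π - 4 / π ^ 2) ^ Fintype.card ι := by
  rw [integral_congr_ae (ae_arcsineMeasure_mem_cube.mono fun _ =>
      integral_centeredProductKernel_arcsineMeasure), arcsineMeasure,
    integral_fintype_prod_eq_pow, integral_arcsinePotential_arcsineLaw]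

theorem arcsine_discrepancy_sq_closed_form_general (ν : Measure (ι → ℝ)) [IsFiniteMeasure ν]
    (hν : ∀ᵐ a ∂ν, a ∈ Set.univ.pi fun _ : ι => Set.Icc (-1 : ℝ) 1) :
    kernelDiscrepancySq centeredProductKernel (arcsineMeasure ι) ν
      = (1 + 2 / π - 4 / π ^ 2) ^ Fintype.card ι - 2 * (∫ a, ∏ j, arcsinePotential (a j) ∂ν)
        + ∫ a, ∫ t, centeredProductKernel a t ∂ν ∂ν := by
  have hcube : IsCompact (Set.univ.pi fun _ : ι => Set.Icc (-1 : ℝ) 1) :=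
    isCompact_univ_pi fun _ => isCompact_Icc
  have hmem := (Measure.quasiMeasurePreserving_fst.ae ae_arcsineMeasure_mem_cube).and
    (Measure.quasiMeasurePreserving_snd (μ := arcsineMeasure ι).ae hν)
  have hint : Integrable (Function.uncurry centeredProductKernel) ((arcsineMeasure ι).prod ν) :=
    integrable_of_ae_mem_isCompact (hcube.prod hcube) hmem
      continuous_uncurry_centeredProductKernel.continuousOn
  rw [kernelDiscrepancySq_of_symm centeredProductKernel_comm hint,
    integral_integral_centeredProductKernel_arcsineMeasure,
    integral_congr_ae (hν.mono fun _ => integral_centeredProductKernel_arcsineMeasure)]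

end ProductKernel

/-- closed form for the squared arcsine discrepancy
`D²(ξ; F_asin)` on `[-1,1]^d` under the kernel
`K_d(x,t) = ∏_j (1 + (|x_j|+|t_j|-|x_j-t_j|)/2)`, where the squared discrepancy
`∫∫ K_d d(F_asin − F_ξ) d(F_asin − F_ξ)` is written out bilinearly. -/
theorem arcsine_discrepancy_sq_closed_form
    (d : ℕ) (hd : 0 < d)
    (m : ℕ) (x : Fin m → Fin d → ℝ)
    (hx : ∀ i, x i ∈ Set.univ.pi fun _ : Fin d => Set.Icc (-1 : ℝ) 1)
    (nn : Fin m → ℕ) (hnn : ∀ i, 0 < nn i)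
    (n : ℕ) (hn : n = ∑ i, nn i)
    (K : (Fin d → ℝ) → (Fin d → ℝ) → ℝ)
    (hK : K = fun a t => ∏ j, (1 + (|a j| + |t j| - |a j - t j|) / 2))
    (μ ν : Measure (Fin d → ℝ))
    (hμ : μ = (volume.restrict (Set.univ.pi fun _ : Fin d => Set.Ioo (-1 : ℝ) 1)).withDensity
      fun t => ENNReal.ofReal (∏ j, 1 / (π * Real.sqrt (1 - t j ^ 2))))
    (hν : ν = ((n : ℝ≥0∞))⁻¹ • ∑ i, (nn i : ℝ≥0∞) • Measure.dirac (x i)) :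
    (∫ a, ∫ t, K a t ∂μ ∂μ) - (∫ a, ∫ t, K a t ∂ν ∂μ) - (∫ a, ∫ t, K a t ∂μ ∂ν)
        + (∫ a, ∫ t, K a t ∂ν ∂ν)
      = (1 + 2 / π - 4 / π ^ 2) ^ d
        - (2 / n) * ∑ i, (nn i : ℝ) *
            ∏ j, (1 + 1 / π + |x i j| / 2
              - (1 / π) * (x i j * Real.arcsin (x i j) + Real.sqrt (1 - x i j ^ 2)))
        + (1 / (n : ℝ) ^ 2) *
            ∑ i, ∑ k, (nn i : ℝ) * (nn k : ℝ) *
              ∏ j, (1 + (|x i j| + |x k j| - |x i j - x k j|) / 2) := by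
  have hcube : ∀ᵐ a ∂empiricalMeasure x nn, a ∈ Set.univ.pi fun _ : Fin d => Set.Icc (-1 : ℝ) 1 :=
    ae_empiricalMeasure nn (.univ_pi fun _ => measurableSet_Icc) hx
  have hdisc := arcsine_discrepancy_sq_closed_form_general (empiricalMeasure x nn) hcube
  rw [integral_empiricalMeasure, integral_integral_empiricalMeasure, Fintype.card_fin] at hdisc
  rw [← arcsineMeasure_eq_withDensity] at hμ
  subst hn hK hμ hν
  refine hdisc.trans ?_
  simp only [arcsinePotential, centeredProductKernel, centeredKernel]
  ring
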